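/- arXiv:2009.08676 — 3 statements merged into one kernel-verified Lean document; each statement's English description precedes it below -/
import Mathlib

section
/- Let n ≥ 1 be an integer. Set n̄ := n if n is odd and n̄ := n/2 if n is even, and u := 1 if n is odd and u := 2 if n is even. Let h ≥ 1 and l be integers with gcd(h, u·l) = 1, (n̄+1)·h + 2·n̄·l > 0 and h + 2·l ≤ 0. Let M ⊆ ℤ⁴ be the subgroup generated by the three vectors v₁ = (−1, n̄, h, 0), v₂ = (−1, 0, 0, n̄) and v₃ = (u, −u·(n̄−1)/2, u·l, −u·(n̄−1)/2) (note that u·(n̄−1)/2 is an integer in both parity cases). Define d := gcd(n, h) if n is odd or h + 2·l is even, and d := gcd(n̄ + h, n̄ − h) otherwise. Then the quotient abelian group ℤ⁴/M is isomorphic to ℤ × ℤ/dℤ. -/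
theorem aux_even (w h l D : ℤ) (hodd : h % 2 = 1) :
    (D ∣ 2 * (w + 1) ∧ D ∣ h * 2 ∧ D ∣ h * w) ↔ (D ∣ w + 1 + h ∧ D ∣ w + 1 - h) := by
  obtain ⟨k, rfl⟩ : ∃ k, h = 2 * k + 1 := ⟨h / 2, by omega⟩
  rcases Int.even_or_odd' w with ⟨m, rfl | rfl⟩
  · constructor
    · rintro ⟨⟨a, ha⟩, ⟨b, hb⟩, ⟨c, hc⟩⟩
      exact ⟨⟨(k + 1) * a - m * b, by linear_combination (k + 1) * ha - m * hb⟩,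
        ⟨(k + 1) * a - m * b - b, by linear_combination (k + 1) * ha - m * hb - hb⟩⟩
    · rintro ⟨⟨a, ha⟩, ⟨b, hb⟩⟩
      exact ⟨⟨a + b, by linear_combination ha + hb⟩, ⟨a - b, by linear_combination ha - hb⟩,
        ⟨m * (a - b), by linear_combination m * (ha - hb)⟩⟩
  · constructor
    · rintro ⟨h1, h2, h3⟩
      have hc : IsCoprime D 2 := by
        obtain ⟨c, hc⟩ := h3
        exact ⟨c, -(2 * k * m + k + m), by linear_combination -hc⟩
      have e1 := hc.dvd_of_dvd_mul_left h1
      have e2 := hc.dvd_of_dvd_mul_right h2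
      exact ⟨dvd_add e1 e2, dvd_sub e1 e2⟩
    · rintro ⟨h1, h2⟩
      have hc : IsCoprime D 2 := by
        obtain ⟨c, hc⟩ := h1
        exact ⟨c, -(m + k + 1), by linear_combination -hc⟩
      have h3 : D ∣ 2 * (2 * k + 1) := by
        have := dvd_sub h1 h2
        ring_nf at this ⊢
        exact this
      have e := hc.dvd_of_dvd_mul_left h3
      refine ⟨?_, e.mul_right _, e.mul_right _⟩
      have := dvd_add h1 h2
      ring_nf at this ⊢
      exact this

theorem aux_quot (nb u h l w p q : ℤ) (hpq : p * h + q * (u * l) = 1)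
    (hw : 2 * w = u * (nb - 1)) (d : ℕ) (a b s t : ℤ)
    (hA : -(u * l * nb + h * w) = d * a) (hB : h * u = d * b) (hst : s * a + t * b = 1) :
    Nonempty (((Fin 4 → ℤ) ⧸ (AddSubgroup.closure
      {![(-1 : ℤ), nb, h, 0], ![(-1 : ℤ), 0, 0, nb], ![u, -w, u * l, -w]} :
      AddSubgroup (Fin 4 → ℤ))) ≃+ ℤ × ZMod d) := by
  let X : (Fin 4 → ℤ) → ℤ := fun x => x 1 - x 2 * (p * nb - q * w)
  let Y : (Fin 4 → ℤ) → ℤ := fun x => x 1 + x 3 + nb * x 0 - x 2 * (q * u)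
  let φ : (Fin 4 → ℤ) →+ ℤ × ZMod d :=
    { toFun := fun x => (b * X x - a * Y x, ((s * X x + t * Y x : ℤ) : ZMod d))
      map_zero' := by simp [X, Y]
      map_add' := by
        intro x y
        ext
        · simp only [X, Y, Pi.add_apply, Prod.mk_add_mk]; ring
        · simp only [X, Y, Pi.add_apply, Prod.mk_add_mk]; push_cast; ring }
  have hφ : ∀ x, φ x = (b * X x - a * Y x, ((s * X x + t * Y x : ℤ) : ZMod d)) := fun _ => rfl
  have key : ∀ x k, X x = k * (d * a) → Y x = k * (d * b) → φ x = 0 := by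
    intro x k h1 h2
    rw [hφ, h1, h2]
    ext
    · simp only [Prod.fst_zero]; ring
    · simp
  have hsurj : Function.Surjective φ := by
    rintro ⟨α, β⟩
    obtain ⟨β, rfl⟩ := ZMod.intCast_surjective β
    refine ⟨![0, t * α + a * β, 0, (-s * α + b * β) - (t * α + a * β)], ?_⟩
    rw [hφ]
    have e1 : X ![0, t * α + a * β, 0, (-s * α + b * β) - (t * α + a * β)] = t * α + a * β := by
      simp [X]
    have e2 : Y ![0, t * α + a * β, 0, (-s * α + b * β) - (t * α + a * β)] = -s * α + b * β := by
      simp [Y]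
    rw [e1, e2]
    ext
    · linear_combination α * hst
    · show ((_ : ℤ) : ZMod d) = ((_ : ℤ) : ZMod d)
      congr 1
      linear_combination β * hst
  have hker : φ.ker = AddSubgroup.closure
      {![(-1 : ℤ), nb, h, 0], ![(-1 : ℤ), 0, 0, nb], ![u, -w, u * l, -w]} := by
    apply le_antisymm
    · intro x hx
      rw [AddMonoidHom.mem_ker, hφ, Prod.mk_eq_zero, ZMod.intCast_zmod_eq_zero_iff_dvd] at hx
      obtain ⟨h1, k, hk⟩ := hx
      have hX : X x = k * (d * a) := by
        linear_combination (-X x) * hst + t * h1 + a * hk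
      have hY : Y x = k * (d * b) := by
        linear_combination (-Y x) * hst - s * h1 + b * hk
      rw [← hA] at hX
      rw [← hB] at hY
      simp only [X, Y] at hX hY
      have hx : x = (x 2 * p - k * (u * l)) • ![(-1 : ℤ), nb, h, 0]
          + (u * (x 2 * q + k * h) - (x 2 * p - k * (u * l)) - x 0) • ![(-1 : ℤ), 0, 0, nb]
          + (x 2 * q + k * h) • ![u, -w, u * l, -w] := by
        ext i
        fin_cases i
        · simp; ring
        · simp
          linear_combination hX
        · simp
          linear_combination (-x 2) * hpq
        · simp
          linear_combination hY - hX + (x 2 * q + k * h) * hw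
      rw [hx]
      refine add_mem (add_mem ?_ ?_) ?_ <;>
        exact AddSubgroup.zsmul_mem _ (AddSubgroup.subset_closure (by simp)) _
    · rw [AddSubgroup.closure_le]
      rintro x (rfl | rfl | rfl)
      · refine key _ (-q) ?_ ?_
        · rw [← hA]; simp [X]; linear_combination (-nb) * hpq
        · rw [← hB]; simp [Y]; ring
      · refine key _ 0 ?_ ?_ <;> simp [X, Y]
      · refine key _ p ?_ ?_
        · rw [← hA]; simp [X]; linear_combination (w) * hpq
        · rw [← hB]; simp [Y]; linear_combination (-u) * hpq - hw
  rw [← hker]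
  exact ⟨QuotientAddGroup.quotientKerEquivOfSurjective φ hsurj⟩

/-- Smith-normal-form computation of the class group of a normal affine almost
homogeneous `SL₂/μₙ`-embedding: the cokernel of the explicit 3×4 integer matrix
with rows `v₁ = (−1, n̄, h, 0)`, `v₂ = (−1, 0, 0, n̄)`,
`v₃ = (u, −u(n̄−1)/2, u·l, −u(n̄−1)/2)` is isomorphic to `ℤ × ℤ/dℤ`. -/
theorem class_group_affine_SL2_embedding
    (n : ℕ) (hn : 1 ≤ n)
    (nb u : ℤ)
    (hnb : nb = if n % 2 = 1 then (n : ℤ) else (n : ℤ) / 2)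
    (hu : u = if n % 2 = 1 then 1 else 2)
    (h l : ℤ) (hh : 1 ≤ h)
    (hgcd : Int.gcd h (u * l) = 1)
    (hpos : (nb + 1) * h + 2 * nb * l > 0)
    (hneg : h + 2 * l ≤ 0)
    (w : ℤ) (hw : 2 * w = u * (nb - 1))
    (M : AddSubgroup (Fin 4 → ℤ))
    (hM : M = AddSubgroup.closure
      {![(-1 : ℤ), nb, h, 0], ![(-1 : ℤ), 0, 0, nb], ![u, -w, u * l, -w]})
    (d : ℕ)
    (hd : d = if n % 2 = 1 ∨ (h + 2 * l) % 2 = 0 then Int.gcd (n : ℤ) h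
          else Int.gcd (nb + h) (nb - h)) :
    Nonempty (((Fin 4 → ℤ) ⧸ M) ≃+ ℤ × ZMod d) := by
  subst hM
  have hbz := Int.gcd_eq_gcd_ab h (u * l)
  rw [hgcd] at hbz
  obtain ⟨p, q, hpq⟩ : ∃ p q : ℤ, p * h + q * (u * l) = 1 :=
    ⟨Int.gcdA h (u * l), Int.gcdB h (u * l), by push_cast at hbz; linear_combination -hbz⟩
  have hu0 : 0 < u := by rw [hu]; split_ifs <;> norm_num
  have hchar : ∀ D : ℤ, (D ∣ -(u * l * nb + h * w) ∧ D ∣ h * u) ↔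
      (D ∣ u * nb ∧ D ∣ h * u ∧ D ∣ h * w) := by
    intro D
    constructor
    · rintro ⟨⟨a, ha⟩, ⟨b, hb⟩⟩
      have h1 : D ∣ u * nb := ⟨p * nb * b - q * u * a - q * w * b, by
        linear_combination (p * nb) * hb - q * u * ha - q * w * hb - u * nb * hpq⟩
      refine ⟨h1, ⟨b, hb⟩, ?_⟩
      obtain ⟨c, hc⟩ := h1
      exact ⟨-a - l * c, by linear_combination -ha - l * hc⟩
    · rintro ⟨⟨a, ha⟩, ⟨b, hb⟩, ⟨c, hc⟩⟩
      exact ⟨⟨-l * a - c, by linear_combination -l * ha - hc⟩, ⟨b, hb⟩⟩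
  have hdvd : ∀ D : ℤ, D ∣ (d : ℤ) ↔ (D ∣ -(u * l * nb + h * w) ∧ D ∣ h * u) := by
    intro D
    rw [hchar]
    by_cases hp : n % 2 = 1
    · simp only [hp, if_true, true_or] at hnb hu hd
      subst hnb hu hd
      rw [Int.dvd_coe_gcd_iff]
      constructor
      · rintro ⟨h1, h2⟩
        exact ⟨by simpa using h1, by simpa using h2, h2.mul_right _⟩
      · rintro ⟨h1, h2, -⟩
        exact ⟨by simpa using h1, by simpa using h2⟩
    · simp only [hp, if_false, false_or] at hnb hu hd
      subst hu
      have hodd : h % 2 = 1 := by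
        rcases Int.emod_two_eq_zero_or_one h with h0 | h0
        · exfalso
          obtain ⟨k, rfl⟩ := Int.dvd_of_emod_eq_zero h0
          have : 2 * (p * k + q * l) = 1 := by linear_combination hpq
          omega
        · exact h0
      rw [if_neg (by omega)] at hd
      have hnw : nb = w + 1 := by omega
      rw [hd, Int.dvd_coe_gcd_iff, hnw]
      exact (aux_even w h l D hodd).symm
  have hdg : d = Int.gcd (-(u * l * nb + h * w)) (h * u) := by
    apply Nat.dvd_antisymm
    · have := (hdvd d).1 dvd_rfl
      exact Int.natCast_dvd_natCast.1 (Int.dvd_coe_gcd this.1 this.2)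
    · exact Int.natCast_dvd_natCast.1 ((hdvd _).2 ⟨Int.gcd_dvd_left .., Int.gcd_dvd_right ..⟩)
  obtain ⟨⟨a, ha⟩, ⟨b, hb⟩⟩ := (hdvd d).1 dvd_rfl
  have hd0 : (d : ℤ) ≠ 0 := by
    intro h0
    rw [h0] at hb
    have : 0 < h * u := by positivity
    omega
  have hbz2 := Int.gcd_eq_gcd_ab (-(u * l * nb + h * w)) (h * u)
  rw [← hdg] at hbz2
  refine aux_quot nb u h l w p q hpq hw d a b
    (Int.gcdA (-(u * l * nb + h * w)) (h * u)) (Int.gcdB (-(u * l * nb + h * w)) (h * u)) ha hb ?_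
  apply mul_left_cancel₀ hd0
  generalize Int.gcdA (-(u * l * nb + h * w)) (h * u) = s at *
  generalize Int.gcdB (-(u * l * nb + h * w)) (h * u) = t at *
  linear_combination -hbz2 - s * ha - t * hb
end

section
/- Let n ≥ 1 be odd and let H be a subgroup of the dicyclic group QuaternionGroup n (Mathlib's `QuaternionGroup n`, the binary dihedral group of order 4n) that contains the commutator subgroup of QuaternionGroup n and satisfies H ≠ ⊤. Then H is cyclic. -/
open scoped commutatorElement

/-- For `n` odd, every proper subgroup of the binary dihedral (dicyclic) group
of order `4n` containing the commutator subgroup is cyclic. -/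
theorem proper_subgroups_above_commutator_cyclic
    (n : ℕ) (hn : 1 ≤ n) (hodd : Odd n)
    (H : Subgroup (QuaternionGroup n))
    (hcomm : commutator (QuaternionGroup n) ≤ H) (hne : H ≠ ⊤) :
    IsCyclic H := by
  have : NeZero n := ⟨by omega⟩
  have hpow : ∀ j : ZMod (2 * n),
      (QuaternionGroup.a 1 : QuaternionGroup n) ^ j.val = QuaternionGroup.a j := by
    intro j
    rw [QuaternionGroup.a_one_pow, ZMod.natCast_zmod_val]
  have hno : ∀ i : ZMod (2 * n), QuaternionGroup.xa i ∉ H := by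
    intro i hi
    apply hne
    have h2 : (QuaternionGroup.a 1 : QuaternionGroup n) ^ 2 ∈ H := by
      have hc : ⁅(QuaternionGroup.a 1 : QuaternionGroup n), QuaternionGroup.xa 0⁆
          = (QuaternionGroup.a 1 : QuaternionGroup n) ^ 2 := by
        rw [commutatorElement_def, mul_inv_eq_iff_eq_mul, mul_inv_eq_iff_eq_mul, sq]
        simp only [QuaternionGroup.a_mul_a, QuaternionGroup.a_mul_xa, QuaternionGroup.xa_mul_a]
        congr 1
        ring
      rw [← hc]
      apply hcomm
      rw [commutator_def]
      exact Subgroup.commutator_mem_commutator (Subgroup.mem_top _) (Subgroup.mem_top _)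
    have hN : (QuaternionGroup.a 1 : QuaternionGroup n) ^ n ∈ H := by
      rw [QuaternionGroup.a_one_pow, ← QuaternionGroup.xa_sq i]
      exact H.pow_mem hi 2
    have h1 : (QuaternionGroup.a 1 : QuaternionGroup n) ∈ H := by
      obtain ⟨k, hk⟩ := hodd
      have he : (QuaternionGroup.a 1 : QuaternionGroup n) ^ n
          = ((QuaternionGroup.a 1 : QuaternionGroup n) ^ 2) ^ k * QuaternionGroup.a 1 := by
        rw [← pow_mul, ← pow_succ]
        exact congrArg (fun m : ℕ => (QuaternionGroup.a 1 : QuaternionGroup n) ^ m) hk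
      rw [he] at hN
      exact (H.mul_mem_cancel_left (H.pow_mem h2 k)).1 hN
    have ha : ∀ j : ZMod (2 * n), QuaternionGroup.a j ∈ H := by
      intro j
      rw [← hpow j]
      exact H.pow_mem h1 _
    rw [eq_top_iff]
    rintro (j | j) -
    · exact ha j
    · have := H.mul_mem hi (ha (j - i))
      simpa using this
  have hle : H ≤ Subgroup.zpowers (QuaternionGroup.a 1 : QuaternionGroup n) := by
    rintro (j | j) hj
    · rw [← hpow j]
      exact Subgroup.npow_mem_zpowers _ _
    · exact absurd hj (hno j)
  exact isCyclic_of_injective (Subgroup.inclusion hle) (Subgroup.inclusion_injective hle)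
end

section
/- Let n ≥ 2 be even and let H be a subgroup of the dicyclic group QuaternionGroup n (Mathlib's `QuaternionGroup n`, the binary dihedral group of order 4n) that contains the commutator subgroup of QuaternionGroup n. Then H is cyclic, or H = ⊤, or H is isomorphic as a group to QuaternionGroup (n/2). -/
open QuaternionGroup in
/-- For `n` even, every subgroup of the binary dihedral (dicyclic) group of
order `4n` containing the commutator subgroup is cyclic, or the whole group,
or isomorphic to the binary dihedral group of order `2n`. -/
theorem subgroups_above_commutator_even
    (n : ℕ) (hn : 2 ≤ n) (heven : Even n)
    (H : Subgroup (QuaternionGroup n))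
    (hcomm : commutator (QuaternionGroup n) ≤ H) :
    IsCyclic H ∨ H = ⊤ ∨ Nonempty (H ≃* QuaternionGroup (n / 2)) := by
  obtain ⟨m, rfl⟩ := heven
  have hm : (m + m) / 2 = m := by omega
  rw [hm]
  have : NeZero (2 * (m + m)) := ⟨by omega⟩
  have : NeZero (2 * m) := ⟨by omega⟩
  have ha2 : (a 2 : QuaternionGroup (m + m)) ∈ H := by
    apply hcomm
    have h := Subgroup.commutator_mem_commutator
      (Subgroup.mem_top (a 1 : QuaternionGroup (m + m))) (Subgroup.mem_top (xa 0))
    rw [← commutator_def] at h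
    convert h using 1
    rw [commutatorElement_def, eq_mul_inv_iff_mul_eq, eq_mul_inv_iff_mul_eq]
    simp only [a_mul_xa, xa_mul_a]
    congr 1
    ring
  have hdbl : ∀ j : ℕ, (a ((2 * j : ℕ) : ZMod (2 * (m + m))) : QuaternionGroup (m + m)) ∈ H := by
    intro j
    have h := H.pow_mem ha2 j
    have h2 : (a 2 : QuaternionGroup (m + m)) = a 1 ^ 2 := by rw [a_one_pow]; norm_cast
    rwa [h2, ← pow_mul, a_one_pow] at h
  by_cases hx : ∃ k, (xa k : QuaternionGroup (m + m)) ∈ H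
  swap
  · left
    have hle : H ≤ Subgroup.zpowers (a 1) := by
      rintro (i | i) hi
      · refine ⟨(i.val : ℤ), ?_⟩
        change (a 1 : QuaternionGroup (m + m)) ^ (i.val : ℤ) = a i
        rw [zpow_natCast, a_one_pow, ZMod.natCast_zmod_val]
      · exact absurd ⟨i, hi⟩ hx
    exact isCyclic_of_injective (Subgroup.inclusion hle) (Subgroup.inclusion_injective hle)
  right
  obtain ⟨k, hk⟩ := hx
  have hxa : ∀ i, (xa i : QuaternionGroup (m + m)) ∈ H ↔ (a (i - k) : QuaternionGroup (m + m)) ∈ H := by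
    intro i
    have : (xa i : QuaternionGroup (m + m)) = xa k * a (i - k) := by simp
    rw [this]
    exact H.mul_mem_cancel_left hk
  by_cases ho : ∃ j : ℕ, (a ((2 * j + 1 : ℕ) : ZMod (2 * (m + m))) : QuaternionGroup (m + m)) ∈ H
  · left
    obtain ⟨j, hj⟩ := ho
    have h1 : (a 1 : QuaternionGroup (m + m)) ∈ H := by
      have := H.mul_mem (H.inv_mem (hdbl j)) hj
      rwa [← a_one_pow, ← a_one_pow, pow_succ, inv_mul_cancel_left] at this
    have hall : ∀ i, (a i : QuaternionGroup (m + m)) ∈ H := by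
      intro i
      have := H.pow_mem h1 i.val
      rwa [a_one_pow, ZMod.natCast_zmod_val] at this
    rw [eq_top_iff]
    rintro (i | i) -
    · exact hall i
    · exact (hxa i).2 (hall _)
  right
  let g : ℤ →+ ZMod (2 * (m + m)) :=
    (Int.castAddHom (ZMod (2 * (m + m)))).comp (AddMonoidHom.mulLeft 2)
  have hgz : ∀ z : ℤ, g z = ((2 * z : ℤ) : ZMod (2 * (m + m))) := fun z => rfl
  have hg : g ((2 * m : ℕ) : ℤ) = 0 := by
    rw [hgz, ZMod.intCast_zmod_eq_zero_iff_dvd]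
    exact ⟨1, by push_cast; ring⟩
  let ι : ZMod (2 * m) →+ ZMod (2 * (m + m)) := ZMod.lift (2 * m) ⟨g, hg⟩
  have hι : ∀ j : ℕ, ι (j : ZMod (2 * m)) = ((2 * j : ℕ) : ZMod (2 * (m + m))) := by
    intro j
    have h := ZMod.lift_coe (2 * m) ⟨g, hg⟩ (j : ℤ)
    simp only [hgz, Int.cast_natCast] at h
    rw [h]; push_cast; rfl
  have hιm : ι (m : ZMod (2 * m)) = ((m + m : ℕ) : ZMod (2 * (m + m))) := by
    rw [hι]
    congr 1
    omega
  have hιinj : Function.Injective ι := by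
    rw [injective_iff_map_eq_zero]
    intro x hx
    rw [← ZMod.natCast_zmod_val x] at hx ⊢
    rw [hι, ZMod.natCast_eq_zero_iff] at hx
    rw [ZMod.natCast_eq_zero_iff]
    obtain ⟨c, hc⟩ := hx
    exact ⟨c, by nlinarith⟩
  have hmem : ∀ i, (a i : QuaternionGroup (m + m)) ∈ H ↔ ∃ j, ι j = i := by
    intro i
    constructor
    · intro hi
      rw [← ZMod.natCast_zmod_val i] at hi ⊢
      rcases Nat.even_or_odd' i.val with ⟨c, hc | hc⟩
      · exact ⟨c, by rw [hι, hc]⟩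
      · rw [hc] at hi
        exact absurd ⟨c, hi⟩ ho
    · rintro ⟨j, rfl⟩
      rw [← ZMod.natCast_zmod_val j, hι]
      exact hdbl _
  let F : QuaternionGroup m → QuaternionGroup (m + m) := fun q => match q with
    | a i => a (ι i)
    | xa i => xa (k + ι i)
  let f : QuaternionGroup m →* QuaternionGroup (m + m) := MonoidHom.mk' F (by
    rintro (i | i) (j | j)
    · simp [F]
    · simp only [F, a_mul_xa, map_sub]; congr 1; ring
    · simp only [F, xa_mul_a, map_add]; congr 1; ring
    · simp only [F, xa_mul_xa, map_sub, map_add, hιm]; congr 1; ring)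
  have hfa : ∀ i, f (a i) = a (ι i) := fun i => rfl
  have hfx : ∀ i, f (xa i) = xa (k + ι i) := fun i => rfl
  have hfi : Function.Injective f := by
    rintro (i | i) (j | j) h
    · rw [hfa, hfa] at h
      injection h with h
      rw [hιinj h]
    · rw [hfa, hfx] at h
      cases h
    · rw [hfa, hfx] at h
      cases h
    · rw [hfx, hfx] at h
      injection h with h
      rw [hιinj (add_left_cancel h)]
  have hr : f.range = H := by
    ext q
    rw [MonoidHom.mem_range]
    rcases q with i | i
    · rw [hmem]
      constructor
      · rintro ⟨j | j, h⟩
        · rw [hfa] at h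
          injection h with h
          exact ⟨j, h⟩
        · rw [hfx] at h
          cases h
      · rintro ⟨j, rfl⟩
        exact ⟨a j, rfl⟩
    · rw [hxa, hmem]
      constructor
      · rintro ⟨j | j, h⟩
        · rw [hfa] at h
          cases h
        · rw [hfx] at h
          injection h with h
          exact ⟨j, by rw [← h]; ring⟩
      · rintro ⟨j, h⟩
        exact ⟨xa j, by rw [hfx, h]; congr 1; ring⟩
  exact ⟨((MonoidHom.ofInjective hfi).trans (MulEquiv.subgroupCongr hr)).symm⟩
end
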